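/- Let Ω = {ℓ, h} be a binary state space with prior p = 1/2 and n = 2 receivers (beliefs identified with the probability of state ℓ), and let β ∈ (0, 2]. For every feasible collection (μ^ℓ, μ^h) of conditional belief distributions for prior 1/2, the unconditional distribution μ = (1/2)·μ^ℓ + (1/2)·μ^h satisfies ∫_{[0,1]^2} |x_1 − x_2|^β dμ(x_1,x_2) ≤ 2^{−β}; moreover this bound is tight: equality holds for the feasible collection induced by revealing the state to receiver 2 and giving no information to receiver 1, namely μ^ℓ = δ_{(1/2,1)} and μ^h = δ_{(1/2,0)}. -/

import Mathlib

open MeasureTheory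

noncomputable section

/-- In the binary-state case a belief is identified with the probability of state `ℓ`,
a number in `[0,1]`. -/
abbrev BeliefI : Type := Set.Icc (0 : ℝ) 1

/-- States: `true` is the low state `ℓ`, `false` is the high state `h`. -/
abbrev StateL : Bool := true
abbrev StateH : Bool := false

/-- The joint distribution of the state and the two receivers' beliefs, for prior
`p = p(ℓ)` and conditional belief distributions `μl` (given `ℓ`) and `μh` (given `h`). -/
def jointPBin (p : ℝ) (μl μh : Measure (Fin 2 → BeliefI)) :
    Measure (Bool × (Fin 2 → BeliefI)) :=
  ENNReal.ofReal p • ((Measure.dirac StateL).prod μl) +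
    ENNReal.ofReal (1 - p) • ((Measure.dirac StateH).prod μh)

/-- Feasibility of a pair of conditional belief distributions in the two-receiver
binary-state problem: conditionally on the information `σ(x_i)` of each receiver `i`,
the conditional probability of the state `ℓ` is `x_i` and of the state `h` is `1 - x_i`. -/
def FeasibleBin (p : ℝ) (μl μh : Measure (Fin 2 → BeliefI)) : Prop :=
  IsProbabilityMeasure μl ∧ IsProbabilityMeasure μh ∧
  ∀ i : Fin 2,
    ((fun z : Bool × (Fin 2 → BeliefI) => (z.2 i).1)
      =ᵐ[jointPBin p μl μh]
      (jointPBin p μl μh)[Set.indicator {z : Bool × (Fin 2 → BeliefI) | z.1 = StateL}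
          (fun _ => (1 : ℝ)) |
        MeasurableSpace.comap (fun z : Bool × (Fin 2 → BeliefI) => z.2 i) inferInstance]) ∧
    ((fun z : Bool × (Fin 2 → BeliefI) => 1 - (z.2 i).1)
      =ᵐ[jointPBin p μl μh]
      (jointPBin p μl μh)[Set.indicator {z : Bool × (Fin 2 → BeliefI) | z.1 = StateH}
          (fun _ => (1 : ℝ)) |
        MeasurableSpace.comap (fun z : Bool × (Fin 2 → BeliefI) => z.2 i) inferInstance])

/-- the value of the binary-state two-receiver persuasion problem -/
def ValBin (p : ℝ) (vl vh : (Fin 2 → BeliefI) → ℝ) : ℝ :=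
  sSup { r : ℝ | ∃ μl μh : Measure (Fin 2 → BeliefI), FeasibleBin p μl μh ∧
    r = p * ∫ x, vl x ∂μl + (1 - p) * ∫ x, vh x ∂μh }

end

/-!
Let `X` be the indicator of the state `ℓ`, so that `𝔼 X = p`. By Pythagoras, a conditional
expectation `W` of `X` satisfies `𝔼 (W - 𝔼 X)² + 𝔼 (X - W)² = Var X`, that is, `W` lies on the
sphere of `L²` with diameter `[𝔼 X, X]`. Two points of a sphere are at most a diameter apart, so
the beliefs satisfy `𝔼 (x₀ - x₁)² ≤ Var X = p (1 - p)`, and Lyapunov's inequality passes from the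
exponent `2` to `β`.
-/

open ProbabilityTheory

section Moments

variable {Ω : Type*} {m m₁ m₂ m₀ : MeasurableSpace Ω} {μ : Measure Ω} [IsProbabilityMeasure μ]

lemma integral_norm_rpow_le_rpow_integral_norm_rpow {E : Type*} [NormedAddCommGroup E] {f : Ω → E}
    {q r : ℝ} (hq : 0 < q) (hqr : q ≤ r) (hf : MemLp f (ENNReal.ofReal r) μ) :
    ∫ ω, ‖f ω‖ ^ q ∂μ ≤ (∫ ω, ‖f ω‖ ^ r ∂μ) ^ (q / r) := by
  have hr : 0 < r := hq.trans_le hqr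
  have integrable_rpow {s : ℝ} (hs : 0 < s) (hsr : s ≤ r) :
      Integrable (fun ω ↦ ‖f ω‖ ^ s) μ := by
    simpa [hs.le] using (hf.mono_exponent (ENNReal.ofReal_le_ofReal hsr)).integrable_norm_rpow
      (by simpa using hs) ENNReal.ofReal_ne_top
  have rpow_rpow (ω : Ω) : (‖f ω‖ ^ r) ^ (q / r) = ‖f ω‖ ^ q := by
    rw [← Real.rpow_mul (norm_nonneg _), mul_div_cancel₀ _ hr.ne']
  have jensen := (Real.concaveOn_rpow (p := q / r) (by positivity)
      (div_le_one_of_le₀ hqr hr.le)).le_map_integral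
    (Real.continuous_rpow_const (by positivity)).continuousOn isClosed_Ici
    (.of_forall fun ω ↦ Real.rpow_nonneg (norm_nonneg (f ω)) r) (integrable_rpow hr le_rfl)
    (by simpa only [Function.comp_def, rpow_rpow] using integrable_rpow hq hqr)
  simpa only [rpow_rpow] using jensen

lemma integral_sq_sub_condExp_add_sq_condExp_sub (hm : m ≤ m₀) {X : Ω → ℝ} (hX : MemLp X 2 μ) :
    ∫ ω, (X ω - (μ[X|m]) ω) ^ 2 + ((μ[X|m]) ω - μ[X]) ^ 2 ∂μ = Var[X; μ] := by
  have hXm : MemLp (μ[X|m]) 2 μ := hX.condExp one_le_two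
  have variance_condExp : Var[μ[X|m]; μ] = ∫ ω, ((μ[X|m]) ω - μ[X]) ^ 2 ∂μ := by
    rw [variance_eq_integral hXm.aemeasurable, integral_condExp hm]
  rw [← integral_condVar_add_variance_condExp hm hX, condVar, integral_condExp hm,
    variance_condExp]
  exact integral_add (hX.sub hXm).integrable_sq (hXm.sub (memLp_const μ[X])).integrable_sq

lemma integral_sq_condExp_sub_condExp_le_variance (hm₁ : m₁ ≤ m₀) (hm₂ : m₂ ≤ m₀) {X : Ω → ℝ}
    (hX : MemLp X 2 μ) :
    ∫ ω, ((μ[X|m₁]) ω - (μ[X|m₂]) ω) ^ 2 ∂μ ≤ Var[X; μ] := by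
  have pythagoras_Y := integral_sq_sub_condExp_add_sq_condExp_sub hm₁ hX
  have pythagoras_Z := integral_sq_sub_condExp_add_sq_condExp_sub hm₂ hX
  have hY : MemLp (μ[X|m₁]) 2 μ := hX.condExp one_le_two
  have hZ : MemLp (μ[X|m₂]) 2 μ := hX.condExp one_le_two
  set Y := μ[X|m₁]
  set Z := μ[X|m₂]
  have integrable_sq_sub {U V : Ω → ℝ} (hU : MemLp U 2 μ) (hV : MemLp V 2 μ) :
      Integrable (fun ω ↦ (U ω - V ω) ^ 2) μ := (hU.sub hV).integrable_sq
  have integrable_sq_sub_mean := integrable_sq_sub hX (memLp_const μ[X])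
  have integrable_sides {W : Ω → ℝ} (hW : MemLp W 2 μ) :
      Integrable (fun ω ↦ (X ω - W ω) ^ 2 + (W ω - μ[X]) ^ 2) μ :=
    (integrable_sq_sub hX hW).add (integrable_sq_sub hW (memLp_const _))
  -- In the quadrilateral with vertices `X, Y, 𝔼 X, Z`, the squares of the diagonals sum to at most
  -- those of the sides.
  have quadrilateral : ∫ ω, (Y ω - Z ω) ^ 2 + (X ω - μ[X]) ^ 2 ∂μ ≤
      ∫ ω, ((X ω - Y ω) ^ 2 + (Y ω - μ[X]) ^ 2) + ((X ω - Z ω) ^ 2 + (Z ω - μ[X]) ^ 2) ∂μ :=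
    integral_mono ((integrable_sq_sub hY hZ).add integrable_sq_sub_mean)
      ((integrable_sides hY).add (integrable_sides hZ))
      fun ω ↦ by linarith [sq_nonneg (Y ω + Z ω - X ω - μ[X])]
  rw [integral_add (integrable_sq_sub hY hZ) integrable_sq_sub_mean,
    integral_add (integrable_sides hY) (integrable_sides hZ), pythagoras_Y, pythagoras_Z,
    ← variance_eq_integral hX.aemeasurable] at quadrilateral
  linarith

lemma variance_indicator_one {s : Set Ω} (hs : MeasurableSet s) :
    Var[s.indicator fun _ ↦ (1 : ℝ); μ] = μ.real s * (1 - μ.real s) := by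
  have sq_eq : (s.indicator fun _ ↦ (1 : ℝ)) ^ 2 = s.indicator fun _ ↦ 1 := by
    ext ω
    by_cases hω : ω ∈ s <;> simp [hω]
  rw [variance_eq_sub ((memLp_const 1).indicator hs), sq_eq, integral_indicator_const 1 hs,
    smul_eq_mul]
  ring

end Moments

section CondExp

variable {Ω α : Type*} [MeasurableSpace Ω] [MeasurableSpace α] {μ : Measure Ω} {X : Ω → α}

lemma condExp_comap_ae_eq_of_ae_eq_const [IsProbabilityMeasure μ] (hX : Measurable X) {c : α}
    (hXc : X =ᵐ[μ] fun _ ↦ c) {f : Ω → ℝ} (hf : Measurable f) :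
    μ[f|MeasurableSpace.comap X inferInstance] =ᵐ[μ] fun _ ↦ μ[f] := by
  have indep : IndepFun f X μ := (indepFun_const_right f c).congr .rfl hXc.symm
  exact condExp_indep_eq hf.comap_le hX.comap_le (comap_measurable f).stronglyMeasurable
    ((IndepFun_iff_Indep f X μ).mp indep)

lemma condExp_comap_ae_eq_comp_of_ae_eq_comp [IsFiniteMeasure μ] (hX : Measurable X) {g : α → ℝ}
    (hg : Measurable g) {f : Ω → ℝ} (hf : Integrable f μ) (hfg : f =ᵐ[μ] g ∘ X) :
    μ[f|MeasurableSpace.comap X inferInstance] =ᵐ[μ] g ∘ X := by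
  refine (condExp_congr_ae hfg).trans (.of_eq ?_)
  exact condExp_of_stronglyMeasurable hX.comap_le
    (hg.comp (comap_measurable X)).stronglyMeasurable (hf.congr hfg)

end CondExp

lemma integral_ofReal_smul_dirac_add_dirac {α : Type*} [MeasurableSpace α]
    [MeasurableSingletonClass α] {p q : ℝ} (hp : 0 ≤ p) (hq : 0 ≤ q) (a b : α) (f : α → ℝ) :
    ∫ x, f x ∂(ENNReal.ofReal p • Measure.dirac a + ENNReal.ofReal q • Measure.dirac b) =
      p * f a + q * f b := by
  rw [integral_add_measure ((integrable_dirac (by simp)).smul_measure ENNReal.ofReal_ne_top)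
      ((integrable_dirac (by simp)).smul_measure ENNReal.ofReal_ne_top),
    integral_smul_measure, integral_smul_measure, integral_dirac, integral_dirac,
    ENNReal.toReal_ofReal hp, ENNReal.toReal_ofReal hq, smul_eq_mul, smul_eq_mul]

section JointDistribution

variable {μl μh : Measure (Fin 2 → BeliefI)}

lemma snd_jointPBin [SFinite μl] [SFinite μh] (p : ℝ) :
    (jointPBin p μl μh).snd = ENNReal.ofReal p • μl + ENNReal.ofReal (1 - p) • μh := by
  rw [jointPBin, Measure.snd, Measure.map_add _ _ measurable_snd, Measure.map_smul,
    Measure.map_smul]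
  simp

lemma integral_snd_jointPBin [SFinite μl] [SFinite μh] (p : ℝ) {f : (Fin 2 → BeliefI) → ℝ}
    (hf : Measurable f) :
    ∫ z, f z.2 ∂(jointPBin p μl μh) =
      ∫ x, f x ∂(ENNReal.ofReal p • μl + ENNReal.ofReal (1 - p) • μh) := by
  rw [← snd_jointPBin, Measure.snd, integral_map (by fun_prop) hf.aestronglyMeasurable]

lemma ae_jointPBin_dirac (p : ℝ) (a b : Fin 2 → BeliefI) {q : Bool × (Fin 2 → BeliefI) → Prop}
    (ha : q (StateL, a)) (hb : q (StateH, b)) :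
    ∀ᵐ z ∂(jointPBin p (Measure.dirac a) (Measure.dirac b)), q z := by
  rw [jointPBin, Measure.dirac_prod_dirac, Measure.dirac_prod_dirac, ae_add_measure_iff]
  exact ⟨Measure.ae_smul_measure (by simpa [ae_dirac_eq] using ha) _,
    Measure.ae_smul_measure (by simpa [ae_dirac_eq] using hb) _⟩

lemma measurableSet_stateL :
    MeasurableSet {z : Bool × (Fin 2 → BeliefI) | z.1 = StateL} :=
  measurable_fst (measurableSet_singleton StateL)

/-- The indicator of the event that the state is `ℓ`, the random variable of which the beliefs are
conditional expectations. -/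
noncomputable abbrev indicatorStateL : Bool × (Fin 2 → BeliefI) → ℝ :=
  {z | z.1 = StateL}.indicator fun _ ↦ 1

/-- The information `σ(x_i)` of receiver `i`, as a σ-algebra on states and belief profiles. -/
abbrev receiverInfo (i : Fin 2) : MeasurableSpace (Bool × (Fin 2 → BeliefI)) :=
  MeasurableSpace.comap (fun z ↦ z.2 i) inferInstance

lemma receiverInfo_le (i : Fin 2) : receiverInfo i ≤ Prod.instMeasurableSpace :=
  Measurable.comap_le (by fun_prop)

lemma measurable_indicatorStateL : Measurable indicatorStateL :=
  measurable_const.indicator measurableSet_stateL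

variable [IsProbabilityMeasure μl] [IsProbabilityMeasure μh] (p : BeliefI)

instance isProbabilityMeasure_jointPBin : IsProbabilityMeasure (jointPBin p μl μh) where
  measure_univ := by
    simp [jointPBin, ← ENNReal.ofReal_add p.2.1 (sub_nonneg.2 p.2.2)]

lemma jointPBin_real_stateL : (jointPBin p μl μh).real {z | z.1 = StateL} = p := by
  have eq_prod : {z : Bool × (Fin 2 → BeliefI) | z.1 = StateL} = {StateL} ×ˢ Set.univ := by
    ext; simp
  simp [eq_prod, jointPBin, measureReal_def, Measure.prod_prod, p.2.1]

lemma memLp_indicatorStateL : MemLp indicatorStateL 2 (jointPBin p μl μh) :=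
  (memLp_const 1).indicator measurableSet_stateL

end JointDistribution

namespace FeasibleBin

variable {p : BeliefI} {μl μh : Measure (Fin 2 → BeliefI)}

lemma of_stateL [IsProbabilityMeasure μl] [IsProbabilityMeasure μh]
    (h : ∀ i : Fin 2, (fun z : Bool × (Fin 2 → BeliefI) ↦ (z.2 i).1) =ᵐ[jointPBin p μl μh]
      (jointPBin p μl μh)[indicatorStateL|receiverInfo i]) :
    FeasibleBin p μl μh := by
  refine ⟨inferInstance, inferInstance, fun i ↦ ⟨h i, ?_⟩⟩
  have indicator_stateH : {z : Bool × (Fin 2 → BeliefI) | z.1 = StateH}.indicator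
      (fun _ ↦ (1 : ℝ)) = (fun _ ↦ 1) - indicatorStateL := by
    ext ⟨s, x⟩
    cases s <;> simp
  rw [indicator_stateH]
  filter_upwards [h i, condExp_sub (integrable_const 1)
    ((memLp_indicatorStateL p).integrable one_le_two) _] with z hz hsub
  rw [hsub, Pi.sub_apply, condExp_const (receiverInfo_le i), ← hz]

lemma integral_sq_sub_le (h : FeasibleBin p μl μh) :
    ∫ z, ((z.2 0).1 - (z.2 1).1) ^ 2 ∂(jointPBin p μl μh) ≤ p * (1 - p) := by
  obtain ⟨_, _, hbelief⟩ := h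
  calc ∫ z, ((z.2 0).1 - (z.2 1).1) ^ 2 ∂(jointPBin p μl μh)
    _ = ∫ z, (((jointPBin p μl μh)[indicatorStateL|receiverInfo 0]) z -
          ((jointPBin p μl μh)[indicatorStateL|receiverInfo 1]) z) ^ 2 ∂(jointPBin p μl μh) := by
      apply integral_congr_ae
      filter_upwards [(hbelief 0).1, (hbelief 1).1] with z h₀ h₁
      rw [h₀, h₁]
    _ ≤ Var[indicatorStateL; jointPBin p μl μh] :=
      integral_sq_condExp_sub_condExp_le_variance (receiverInfo_le 0) (receiverInfo_le 1)
        (memLp_indicatorStateL p)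
    _ = p * (1 - p) := by
      rw [variance_indicator_one measurableSet_stateL, jointPBin_real_stateL]

lemma integral_abs_sub_rpow_le (h : FeasibleBin p μl μh) {β : ℝ} (hβ0 : 0 < β) (hβ2 : β ≤ 2) :
    ∫ x, |(x 0).1 - (x 1).1| ^ β
        ∂(ENNReal.ofReal p • μl + ENNReal.ofReal (1 - p) • μh) ≤
      ((p : ℝ) * (1 - p)) ^ (β / 2) := by
  have second_moment := h.integral_sq_sub_le
  obtain ⟨_, _, -⟩ := h
  have memLp_sub : MemLp (fun z : Bool × (Fin 2 → BeliefI) ↦ (z.2 0).1 - (z.2 1).1)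
      (ENNReal.ofReal 2) (jointPBin p μl μh) :=
    .of_bound (by fun_prop) 1 <| .of_forall fun z ↦
      abs_le.2 ⟨by linarith [(z.2 0).2.1, (z.2 1).2.2], by linarith [(z.2 0).2.2, (z.2 1).2.1]⟩
  have lyapunov := integral_norm_rpow_le_rpow_integral_norm_rpow hβ0 hβ2 memLp_sub
  simp only [Real.norm_eq_abs, Real.rpow_two, sq_abs] at lyapunov
  rw [← integral_snd_jointPBin p (f := fun x ↦ |(x 0).1 - (x 1).1| ^ β) (by fun_prop)]
  exact lyapunov.trans <| Real.rpow_le_rpow (integral_nonneg fun _ ↦ sq_nonneg _) second_moment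
    (by positivity)

end FeasibleBin

/-- The belief profile in which receiver `0`, who learns nothing, keeps the belief `q`, and
receiver `1` holds the belief `x`. The policy that reveals the state to receiver `1` only, at the
prior `p`, is the pair of point masses at `soloBelief p 1` (in state `ℓ`) and `soloBelief p 0`
(in state `h`). -/
def soloBelief (q x : BeliefI) : Fin 2 → BeliefI := fun i ↦ if i = 0 then q else x

lemma feasibleBin_dirac_soloBelief (p : BeliefI) :
    FeasibleBin p (Measure.dirac (soloBelief p 1)) (Measure.dirac (soloBelief p 0)) := by
  refine .of_stateL fun i ↦ ?_
  match i with
  | 0 =>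
    have belief_eq : (fun z : Bool × (Fin 2 → BeliefI) ↦ z.2 0)
        =ᵐ[jointPBin p (.dirac (soloBelief p 1)) (.dirac (soloBelief p 0))] fun _ ↦ p :=
      ae_jointPBin_dirac _ _ _ rfl rfl
    filter_upwards [belief_eq, condExp_comap_ae_eq_of_ae_eq_const (by fun_prop) belief_eq
      measurable_indicatorStateL] with z hz hcond
    rw [hcond, hz, integral_indicator_const 1 measurableSet_stateL, jointPBin_real_stateL,
      smul_eq_mul, mul_one]
  | 1 =>
    refine (condExp_comap_ae_eq_comp_of_ae_eq_comp (by fun_prop) measurable_subtype_coe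
      ((memLp_indicatorStateL p).integrable one_le_two) ?_).symm
    exact ae_jointPBin_dirac _ _ _ (by simp [soloBelief]) (by simp [soloBelief])

lemma integral_abs_sub_rpow_dirac_soloBelief (p : BeliefI) (β : ℝ) :
    ∫ x, |(x 0).1 - (x 1).1| ^ β ∂(ENNReal.ofReal p • Measure.dirac (soloBelief p 1) +
        ENNReal.ofReal (1 - p) • Measure.dirac (soloBelief p 0)) =
      p * (1 - p) ^ β + (1 - p) * (p : ℝ) ^ β := by
  rw [integral_ofReal_smul_dirac_add_dirac p.2.1 (sub_nonneg.2 p.2.2)]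
  simp [soloBelief, abs_sub_comm (p : ℝ) 1, abs_of_nonneg p.2.1, abs_of_nonneg (sub_nonneg.2 p.2.2)]

lemma one_half_rpow (β : ℝ) : (1 / 2 : ℝ) ^ β = 2 ^ (-β) := by
  rw [one_div, Real.inv_rpow zero_le_two, Real.rpow_neg zero_le_two]

lemma half_mul_half_rpow_div_two (β : ℝ) : ((1 / 2 : ℝ) * (1 / 2)) ^ (β / 2) = 2 ^ (-β) := by
  rw [← sq, ← Real.rpow_natCast_mul (by norm_num), Nat.cast_two, mul_div_cancel₀ _ two_ne_zero,
    one_half_rpow]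

/-- At a general prior the bound is attained for `β = 2`, and for every `β` when `p = 1 / 2`. -/
theorem beta_polarization_bound_general (p : BeliefI) {β : ℝ} (hβ0 : 0 < β) (hβ2 : β ≤ 2) :
    (∀ μl μh : Measure (Fin 2 → BeliefI), FeasibleBin p μl μh →
      ∫ x, |(x 0).1 - (x 1).1| ^ β ∂(ENNReal.ofReal p • μl + ENNReal.ofReal (1 - p) • μh) ≤
        ((p : ℝ) * (1 - p)) ^ (β / 2)) ∧
    FeasibleBin p (Measure.dirac (soloBelief p 1)) (Measure.dirac (soloBelief p 0)) ∧
      ∫ x, |(x 0).1 - (x 1).1| ^ β ∂(ENNReal.ofReal p • Measure.dirac (soloBelief p 1) +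
          ENNReal.ofReal (1 - p) • Measure.dirac (soloBelief p 0)) =
        p * (1 - p) ^ β + (1 - p) * (p : ℝ) ^ β :=
  ⟨fun _ _ h ↦ h.integral_abs_sub_rpow_le hβ0 hβ2, feasibleBin_dirac_soloBelief p,
    integral_abs_sub_rpow_dirac_soloBelief p β⟩

/-- the maximal `β`-polarization `E|x₁ − x₂|^β` for `β ∈ (0,2]` at the
prior `1/2` is `2^{−β}`, attained by the full-information/no-information policy. -/
theorem beta_polarization_bound
    (β : ℝ) (hβ0 : 0 < β) (hβ2 : β ≤ 2) :
    (∀ μl μh : Measure (Fin 2 → BeliefI), FeasibleBin (1 / 2) μl μh →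
      (∫ x, |(x 0).1 - (x 1).1| ^ β
          ∂(ENNReal.ofReal (1 / 2) • μl + ENNReal.ofReal (1 / 2) • μh))
        ≤ 2 ^ (-β)) ∧
    (FeasibleBin (1 / 2)
        (Measure.dirac (fun i : Fin 2 =>
          if i = 0 then (⟨1 / 2, by norm_num⟩ : BeliefI) else ⟨1, by norm_num⟩))
        (Measure.dirac (fun i : Fin 2 =>
          if i = 0 then (⟨1 / 2, by norm_num⟩ : BeliefI) else ⟨0, by norm_num⟩)) ∧
      (∫ x, |(x 0).1 - (x 1).1| ^ β
          ∂(ENNReal.ofReal (1 / 2) •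
              (Measure.dirac (fun i : Fin 2 =>
                if i = 0 then (⟨1 / 2, by norm_num⟩ : BeliefI) else ⟨1, by norm_num⟩)) +
            ENNReal.ofReal (1 / 2) •
              (Measure.dirac (fun i : Fin 2 =>
                if i = 0 then (⟨1 / 2, by norm_num⟩ : BeliefI) else ⟨0, by norm_num⟩))))
        = 2 ^ (-β)) := by
  have general := beta_polarization_bound_general ⟨1 / 2, by norm_num⟩ hβ0 hβ2
  simp only [sub_half, half_mul_half_rpow_div_two, one_half_rpow, ← add_mul, add_halves, one_mul]
    at general
  exact general
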